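/- Let 1 < p < ∞ and set τ = min(p,2). There exists a constant C > 0, depending only on n and p, such that for every α ≥ 1 and every compactly supported continuous f : (0,∞) × ℝⁿ → ℂ one has ‖f‖_{T^{p,2}} ≤ ‖f‖_{T_α^{p,2}} ≤ C (1 + log α) α^{n/τ} ‖f‖_{T^{p,2}}. -/

import Mathlib

open MeasureTheory Metric Set
open scoped ENNReal NNReal

noncomputable section

attribute [local instance] Classical.propDecidable

abbrev Rn (n : ℕ) := EuclideanSpace ℝ (Fin n)
abbrev L2 (n : ℕ) : Type := Lp ℂ 2 (volume : Measure (Rn n))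

/-- `f` is a compactly supported continuous function on `(0,∞) × ℝⁿ`. -/
def CcOnPos (n : ℕ) (f : ℝ → Rn n → ℂ) : Prop :=
  Continuous (Function.uncurry f) ∧ HasCompactSupport (Function.uncurry f) ∧
    tsupport (Function.uncurry f) ⊆ Ioi (0:ℝ) ×ˢ (univ : Set (Rn n))

/-- The weighted tent space norm `‖g‖_{T_α^{p,2,m}(t^β dt dy)}`. -/
def tentNorm (n m : ℕ) (β p α : ℝ) (g : ℝ → Rn n → ℂ) : ℝ≥0∞ :=
  (∫⁻ x : Rn n, (∫⁻ t in Ioi (0:ℝ),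
      (∫⁻ y in ball x (α * t ^ ((m:ℝ)⁻¹)), (‖g t y‖₊ : ℝ≥0∞) ^ 2)
        * ENNReal.ofReal (t ^ (β - (n:ℝ)/(m:ℝ)))) ^ (p/2)) ^ (1/p)

/-!
The square of the conical square function of aperture `α` is the mass `S_α` that a measure `ν` on
`(0, ∞) × ℝⁿ` gives to the cone of aperture `α`, so the claim compares `∫ S_α ^ r` with
`∫ S_1 ^ r` for `r = p / 2`. Integrating `ν` against volumes of balls shows that `r = 1` costs the
factor `A = α ^ n` by which these volumes grow. For `r > 1`, test `S_α` against `h`: the integral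
of `h` over a ball of radius `α t` is at most `A` times that of its maximal function over the
concentric ball of radius `t`, so duality costs `A ^ r`. For `r < 1`, let `O = {s < S_1}`. The
balls in which `O` has density more than `(2 A)⁻¹` cover a set of measure at most a constant times
`A |O|`, and off this set the integral of `S_α` is at most `2 A` times that of `S_1` off `O`. This
bounds the distribution function of `S_α`, and integrating over `s` costs only `A`.
-/

section PowerMeasure

/-- The measure `q * s ^ (q - 1) ds` on `(0, ∞)`. It gives mass `a ^ q` to `{s | s < a}`, so
integrating a distribution function against it computes an `L ^ q` norm. -/
def powerMeasure (q : ℝ) : Measure ℝ :=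
  (volume.restrict (Ioi 0)).withDensity fun s => ENNReal.ofReal (q * s ^ (q - 1))

instance (q : ℝ) : SFinite (powerMeasure q) := by
  unfold powerMeasure
  infer_instance

lemma lintegral_powerMeasure (q : ℝ) (g : ℝ → ℝ≥0∞) :
    ∫⁻ s, g s ∂powerMeasure q = ∫⁻ s in Ioi 0, ENNReal.ofReal (q * s ^ (q - 1)) * g s :=
  lintegral_withDensity_eq_lintegral_mul_non_measurable _ (by fun_prop)
    (.of_forall fun _ => ENNReal.ofReal_lt_top) g

lemma lintegral_powerMeasure_mono {q : ℝ} {g g' : ℝ → ℝ≥0∞} (h : ∀ s, 0 < s → g s ≤ g' s) :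
    ∫⁻ s, g s ∂powerMeasure q ≤ ∫⁻ s, g' s ∂powerMeasure q := by
  simp only [lintegral_powerMeasure]
  exact setLIntegral_mono' measurableSet_Ioi fun s hs => mul_le_mul_right (h s hs) _

lemma lintegral_powerMeasure_eq_mul {q : ℝ} (hq : 1 < q) (g : ℝ → ℝ≥0∞) :
    ∫⁻ s, g s ∂powerMeasure q =
      ENNReal.ofReal (q / (q - 1)) * ∫⁻ s, ENNReal.ofReal s * g s ∂powerMeasure (q - 1) := by
  have hq' : 0 < q - 1 := sub_pos.2 hq
  rw [lintegral_powerMeasure, lintegral_powerMeasure,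
    ← lintegral_const_mul' _ _ ENNReal.ofReal_ne_top]
  refine setLIntegral_congr_fun measurableSet_Ioi fun s (hs : 0 < s) => ?_
  simp only [← mul_assoc]
  rw [← ENNReal.ofReal_mul (by positivity), ← ENNReal.ofReal_mul (by positivity),
    Real.rpow_sub_one hs.ne' (q - 1)]
  field_simp

lemma setLIntegral_Ioo_ofReal_rpow {q b : ℝ} (hq : 0 < q) (hb : 0 ≤ b) :
    ∫⁻ s in Ioo 0 b, ENNReal.ofReal (q * s ^ (q - 1)) = ENNReal.ofReal b ^ q := by
  have hint : IntegrableOn (fun s : ℝ => q * s ^ (q - 1)) (Ioc 0 b) :=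
    (intervalIntegrable_iff_integrableOn_Ioc_of_le hb).1
      ((intervalIntegral.intervalIntegrable_rpow' (by linarith)).const_mul q)
  have hnonneg : 0 ≤ᵐ[volume.restrict (Ioc 0 b)] fun s : ℝ => q * s ^ (q - 1) := by
    filter_upwards [ae_restrict_mem measurableSet_Ioc] with s hs
    exact mul_nonneg hq.le (Real.rpow_nonneg hs.1.le _)
  rw [setLIntegral_congr Ioo_ae_eq_Ioc, ← ofReal_integral_eq_lintegral_ofReal hint hnonneg,
    ← intervalIntegral.integral_of_le hb, intervalIntegral.integral_const_mul,
    integral_rpow (Or.inl (by linarith)), sub_add_cancel, Real.zero_rpow hq.ne', sub_zero,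
    mul_div_cancel₀ _ hq.ne', ENNReal.ofReal_rpow_of_nonneg hb hq.le]

lemma powerMeasure_setOf_ofReal_lt {q : ℝ} (hq : 0 < q) (a : ℝ≥0∞) :
    powerMeasure q {s | ENNReal.ofReal s < a} = a ^ q := by
  have hreal {b : ℝ} (hb : 0 ≤ b) :
      powerMeasure q {s | ENNReal.ofReal s < ENNReal.ofReal b} = ENNReal.ofReal b ^ q := by
    have hIoo : {s | ENNReal.ofReal s < ENNReal.ofReal b} ∩ Ioi 0 = Ioo 0 b := by
      ext s
      exact and_comm.trans
        (and_congr_right fun hs => ENNReal.ofReal_lt_ofReal_iff_of_nonneg (le_of_lt hs))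
    have hmeas : MeasurableSet {s | ENNReal.ofReal s < ENNReal.ofReal b} :=
      measurableSet_lt (by fun_prop) measurable_const
    rw [powerMeasure, withDensity_apply _ hmeas, Measure.restrict_restrict hmeas, hIoo,
      setLIntegral_Ioo_ofReal_rpow hq hb]
  obtain rfl | ha := eq_or_ne a ⊤
  · rw [ENNReal.top_rpow_of_pos hq]
    refine ENNReal.eq_top_of_forall_nnreal_le fun M => ?_
    calc (M : ℝ≥0∞) = ((M ^ q⁻¹ : ℝ≥0) : ℝ≥0∞) ^ q := by
          rw [← ENNReal.coe_rpow_of_nonneg _ hq.le, NNReal.rpow_inv_rpow hq.ne']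
      _ = powerMeasure q {s | ENNReal.ofReal s < ENNReal.ofReal (M ^ q⁻¹ : ℝ≥0)} := by
          rw [hreal NNReal.zero_le_coe, ENNReal.ofReal_coe_nnreal]
      _ ≤ powerMeasure q {s | ENNReal.ofReal s < ⊤} :=
          measure_mono fun s _ => ENNReal.ofReal_lt_top
  · rw [← ENNReal.ofReal_toReal ha, hreal ENNReal.toReal_nonneg]

lemma lintegral_rpow_eq_lintegral_meas_lt_powerMeasure {X : Type*} [MeasurableSpace X]
    (μ : Measure X) [SFinite μ] {q : ℝ} (hq : 0 < q) {F : X → ℝ≥0∞} (hF : Measurable F) :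
    ∫⁻ x, F x ^ q ∂μ = ∫⁻ s, μ {x | ENNReal.ofReal s < F x} ∂powerMeasure q := by
  have hmeas : MeasurableSet {z : X × ℝ | ENNReal.ofReal z.2 < F z.1} :=
    measurableSet_lt (by fun_prop) (by fun_prop)
  simp only [← powerMeasure_setOf_ofReal_lt hq]
  exact (Measure.prod_apply hmeas).symm.trans (Measure.prod_apply_symm hmeas)

lemma setLIntegral_Ioi_ofReal_rpow {r b : ℝ} (hr : 0 < r) (hr1 : r < 1) (hb : 0 < b) :
    ∫⁻ s in Ioi b, ENNReal.ofReal (r * s ^ (r - 2)) =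
      ENNReal.ofReal (r / (1 - r) * b ^ (r - 1)) := by
  have hint : IntegrableOn (fun s : ℝ => r * s ^ (r - 2)) (Ioi b) :=
    (integrableOn_Ioi_rpow_of_lt (by linarith) hb).const_mul r
  have hnonneg : 0 ≤ᵐ[volume.restrict (Ioi b)] fun s : ℝ => r * s ^ (r - 2) := by
    filter_upwards [ae_restrict_mem measurableSet_Ioi] with s hs
    exact mul_nonneg hr.le (Real.rpow_nonneg (hb.trans hs).le _)
  rw [← ofReal_integral_eq_lintegral_ofReal hint hnonneg, integral_const_mul,
    integral_Ioi_rpow_of_lt (by linarith) hb, show r - 2 + 1 = -(1 - r) by ring,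
    show r - 1 = -(1 - r) by ring, neg_div_neg_eq, mul_div_assoc', div_mul_eq_mul_div]

lemma mul_setLIntegral_inv_powerMeasure_le {r : ℝ} (hr : 0 < r) (hr1 : r < 1) (a : ℝ≥0∞) :
    a * ∫⁻ s in {s | a ≤ ENNReal.ofReal s}, (ENNReal.ofReal s)⁻¹ ∂powerMeasure r ≤
      ENNReal.ofReal (r / (1 - r)) * a ^ r := by
  obtain rfl | ha := eq_or_ne a ⊤
  · simp
  obtain rfl | ha0 := eq_or_ne a 0
  · simp
  obtain ⟨b, hb, rfl⟩ : ∃ b : ℝ, 0 < b ∧ ENNReal.ofReal b = a :=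
    ⟨a.toReal, ENNReal.toReal_pos ha0 ha, ENNReal.ofReal_toReal ha⟩
  have hIci : {s | ENNReal.ofReal b ≤ ENNReal.ofReal s} = Ici b := by
    ext s
    exact ENNReal.ofReal_le_ofReal_iff'.trans (or_iff_left hb.not_ge)
  have hdensity : ∫⁻ s in Ici b, (ENNReal.ofReal s)⁻¹ ∂powerMeasure r =
      ∫⁻ s in Ici b, ENNReal.ofReal (r * s ^ (r - 2)) := by
    rw [powerMeasure, setLIntegral_withDensity_eq_setLIntegral_mul_non_measurable _ (by fun_prop)
      _ measurableSet_Ici (.of_forall fun _ => ENNReal.ofReal_lt_top),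
      Measure.restrict_restrict measurableSet_Ici,
      inter_eq_left.2 (Ici_subset_Ioi.2 hb)]
    refine setLIntegral_congr_fun measurableSet_Ici fun s hs => ?_
    have hs0 : 0 < s := hb.trans_le hs
    rw [Pi.mul_apply, ← ENNReal.ofReal_inv_of_pos hs0, ← ENNReal.ofReal_mul (by positivity),
      mul_assoc, ← div_eq_mul_inv, ← Real.rpow_sub_one hs0.ne', sub_sub, one_add_one_eq_two]
  have : 0 < 1 - r := sub_pos.2 hr1
  rw [hIci, hdensity, setLIntegral_congr Ioi_ae_eq_Ici.symm,
    setLIntegral_Ioi_ofReal_rpow hr hr1 hb, ENNReal.ofReal_rpow_of_pos hb,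
    ← ENNReal.ofReal_mul hb.le, ← ENNReal.ofReal_mul (by positivity),
    Real.rpow_sub_one hb.ne']
  field_simp
  rfl

lemma measurable_meas_ofReal_lt {X : Type*} [MeasurableSpace X] (μ : Measure X) (F : X → ℝ≥0∞) :
    Measurable fun s : ℝ => μ {x | ENNReal.ofReal s < F x} :=
  Antitone.measurable fun _ _ hs => measure_mono fun _ hx =>
    (ENNReal.ofReal_le_ofReal hs).trans_lt hx

lemma lintegral_inv_mul_setLIntegral_le_powerMeasure {X : Type*} [MeasurableSpace X]
    (μ : Measure X) [SFinite μ] {r : ℝ} (hr : 0 < r) (hr1 : r < 1) {F : X → ℝ≥0∞}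
    (hF : Measurable F) :
    ∫⁻ s, (ENNReal.ofReal s)⁻¹ * ∫⁻ x in {x | F x ≤ ENNReal.ofReal s}, F x ∂μ ∂powerMeasure r ≤
      ENNReal.ofReal (r / (1 - r)) * ∫⁻ x, F x ^ r ∂μ := by
  have hmeas : MeasurableSet {z : ℝ × X | F z.2 ≤ ENNReal.ofReal z.1} :=
    measurableSet_le (by fun_prop) (by fun_prop)
  set G : ℝ → X → ℝ≥0∞ := fun s x =>
    {z : ℝ × X | F z.2 ≤ ENNReal.ofReal z.1}.indicator (fun z => (ENNReal.ofReal z.1)⁻¹ * F z.2)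
      (s, x)
  have hG : Measurable (Function.uncurry G) :=
    Measurable.indicator (f := fun z : ℝ × X => (ENNReal.ofReal z.1)⁻¹ * F z.2) (by fun_prop) hmeas
  have hleft (s : ℝ) : (ENNReal.ofReal s)⁻¹ * ∫⁻ x in {x | F x ≤ ENNReal.ofReal s}, F x ∂μ =
      ∫⁻ x, G s x ∂μ := by
    rw [← lintegral_const_mul _ hF, ← lintegral_indicator (measurableSet_le hF measurable_const)]
    rfl
  have hright (x : X) : ∫⁻ s, G s x ∂powerMeasure r =
      F x * ∫⁻ s in {s | F x ≤ ENNReal.ofReal s}, (ENNReal.ofReal s)⁻¹ ∂powerMeasure r := by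
    rw [mul_comm, ← lintegral_mul_const _ (by fun_prop),
      ← lintegral_indicator (measurableSet_le measurable_const (by fun_prop))]
    rfl
  calc ∫⁻ s, (ENNReal.ofReal s)⁻¹ * ∫⁻ x in {x | F x ≤ ENNReal.ofReal s}, F x ∂μ ∂powerMeasure r
      = ∫⁻ x, F x * ∫⁻ s in {s | F x ≤ ENNReal.ofReal s}, (ENNReal.ofReal s)⁻¹ ∂powerMeasure r
          ∂μ := by
        simp only [hleft, ← hright]
        exact lintegral_lintegral_swap hG.aemeasurable
    _ ≤ ∫⁻ x, ENNReal.ofReal (r / (1 - r)) * F x ^ r ∂μ :=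
        lintegral_mono fun x => mul_setLIntegral_inv_powerMeasure_le hr hr1 (F x)
    _ = ENNReal.ofReal (r / (1 - r)) * ∫⁻ x, F x ^ r ∂μ :=
        lintegral_const_mul _ (by fun_prop)

lemma lintegral_rpow_le_of_forall_lintegral_mul_le {X : Type*} [MeasurableSpace X]
    {μ : Measure X} [SigmaFinite μ] {r q : ℝ} (hrq : r.HolderConjugate q) {F : X → ℝ≥0∞}
    {B : ℝ≥0∞}
    (hF : ∀ h : X → ℝ≥0∞, Measurable h →
      ∫⁻ x, F x * h x ∂μ ≤ B * (∫⁻ x, h x ^ q ∂μ) ^ (1 / q)) :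
    ∫⁻ x, F x ^ r ∂μ ≤ B ^ r := by
  have hr := hrq.pos
  have hq := hrq.symm.pos
  refine le_of_not_gt fun hlt => ?_
  rw [lintegral_eq_nnreal] at hlt
  simp only [lt_iSup_iff] at hlt
  obtain ⟨φ, hφF, hφ⟩ := hlt
  rw [← SimpleFunc.lintegral_eq_lintegral] at hφ
  obtain ⟨g, hgφ, hg_top, hg⟩ := SimpleFunc.exists_lt_lintegral_simpleFunc_of_lt_lintegral hφ
  set J := ∫⁻ x, (g x : ℝ≥0∞) ∂μ with hJ
  have hJ0 : J ≠ 0 := (zero_le.trans_lt hg).ne'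
  have hsplit (a : ℝ≥0∞) : a ^ (1 / r) * a ^ (1 / q) = a := by
    rw [← ENNReal.rpow_add_of_nonneg _ _ (by positivity) (by positivity), one_div, one_div,
      hrq.inv_add_inv_eq_one, ENNReal.rpow_one]
  have hgF (x : X) : (g x : ℝ≥0∞) ≤ F x * (g x : ℝ≥0∞) ^ (1 / q) := by
    have hroot : (g x : ℝ≥0∞) ^ (1 / r) ≤ F x := by
      rw [one_div, ENNReal.rpow_inv_le_iff hr]
      exact (ENNReal.coe_le_coe.2 (hgφ x)).trans (hφF x)
    calc (g x : ℝ≥0∞) = (g x : ℝ≥0∞) ^ (1 / r) * (g x : ℝ≥0∞) ^ (1 / q) := (hsplit _).symm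
      _ ≤ F x * (g x : ℝ≥0∞) ^ (1 / q) := by gcongr
  have hJB : J ^ (1 / r) * J ^ (1 / q) ≤ B * J ^ (1 / q) := by
    calc J ^ (1 / r) * J ^ (1 / q) = ∫⁻ x, (g x : ℝ≥0∞) ∂μ := hsplit J
      _ ≤ ∫⁻ x, F x * (g x : ℝ≥0∞) ^ (1 / q) ∂μ := lintegral_mono hgF
      _ ≤ B * (∫⁻ x, ((g x : ℝ≥0∞) ^ (1 / q)) ^ q ∂μ) ^ (1 / q) := hF _ (by fun_prop)
      _ = B * J ^ (1 / q) := by simp only [one_div, ENNReal.rpow_inv_rpow hq.ne', hJ]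
  have hcancel : J ^ (1 / r) ≤ B :=
    (ENNReal.mul_le_mul_iff_left (by simp [hJ0, hg_top.ne])
      (ENNReal.rpow_ne_top_of_nonneg (by positivity) hg_top.ne)).1 hJB
  rw [one_div, ENNReal.rpow_inv_le_iff hr] at hcancel
  exact hcancel.not_gt hg

end PowerMeasure

section MaximalFunction

variable {X : Type*} [PseudoMetricSpace X] [MeasurableSpace X] {μ : Measure X} {K : ℝ≥0∞}

/-- Dilating a ball by the factor `a` multiplies its measure by at most `K`. -/
def BallGrowth (μ : Measure X) (a : ℝ) (K : ℝ≥0∞) : Prop :=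
  ∀ c r, μ (ball c (a * r)) ≤ K * μ (ball c r)

/-- The uncentred Hardy–Littlewood maximal function, over open balls. -/
def maximalFunction (μ : Measure X) (h : X → ℝ≥0∞) (x : X) : ℝ≥0∞ :=
  ⨆ (z : X × ℝ) (_ : x ∈ ball z.1 z.2), ⨍⁻ y in ball z.1 z.2, h y ∂μ

lemma setOf_lt_maximalFunction (h : X → ℝ≥0∞) (s : ℝ≥0∞) :
    {x | s < maximalFunction μ h x} =
      ⋃ z ∈ {z : X × ℝ | s < ⨍⁻ y in ball z.1 z.2, h y ∂μ}, ball z.1 z.2 := by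
  ext x
  simp only [maximalFunction, mem_ofPred_eq, lt_iSup_iff, mem_iUnion, exists_prop, and_comm]

lemma measurable_maximalFunction [OpensMeasurableSpace X] (h : X → ℝ≥0∞) :
    Measurable (maximalFunction μ h) :=
  measurable_of_Ioi fun s => by
    have hopen : IsOpen {x | s < maximalFunction μ h x} := by
      rw [setOf_lt_maximalFunction]
      exact isOpen_biUnion fun _ _ => isOpen_ball
    exact hopen.measurableSet

lemma setLAverage_ball_le_maximalFunction (h : X → ℝ≥0∞) {x c : X} {r : ℝ} (hx : x ∈ ball c r) :
    ⨍⁻ y in ball c r, h y ∂μ ≤ maximalFunction μ h x :=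
  le_iSup₂_of_le (c, r) hx le_rfl

lemma maximalFunction_le_add_const {g h : X → ℝ≥0∞} {a : ℝ≥0∞} (hg : Measurable g)
    (hle : ∀ x, h x ≤ g x + a) (x : X) :
    maximalFunction μ h x ≤ maximalFunction μ g x + a := by
  refine iSup₂_le fun z hz => ?_
  calc ⨍⁻ y in ball z.1 z.2, h y ∂μ
      ≤ ⨍⁻ y in ball z.1 z.2, (g y + a) ∂μ := lintegral_mono hle
    _ = (⨍⁻ y in ball z.1 z.2, g y ∂μ) + a * (μ (ball z.1 z.2) / μ (ball z.1 z.2)) := by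
        simp only [setLAverage_eq, lintegral_add_left hg, setLIntegral_const, ENNReal.add_div,
          mul_div_assoc]
    _ ≤ maximalFunction μ g x + a := by
        gcongr
        · exact setLAverage_ball_le_maximalFunction g hz
        · exact mul_le_of_le_one_right' ENNReal.div_self_le_one

variable [SecondCountableTopology X] [OpensMeasurableSpace X]

lemma BallGrowth.mul_measure_biUnion_ball_le (hK : BallGrowth μ 5 K) (h : X → ℝ≥0∞) (s : ℝ≥0∞)
    {ι : Type*} {t : Set ι} {c : ι → X} {r : ι → ℝ} {R : ℝ} (hr : ∀ i ∈ t, r i ≤ R)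
    (hs : ∀ i ∈ t, s * μ (ball (c i) (r i)) ≤ ∫⁻ x in ball (c i) (r i), h x ∂μ) :
    s * μ (⋃ i ∈ t, ball (c i) (r i)) ≤ K * ∫⁻ x, h x ∂μ := by
  -- balls of nonpositive radius are discarded so that disjoint balls form a countable family
  let t' := {i ∈ t | 0 < r i}
  have hunion : ⋃ i ∈ t, ball (c i) (r i) ⊆ ⋃ i ∈ t', ball (c i) (r i) :=
    iUnion₂_subset fun i hi x hx => mem_biUnion (⟨hi, pos_of_mem_ball hx⟩ : i ∈ t') hx
  obtain ⟨u, hut, hdisj, hcover⟩ :=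
    Vitali.exists_disjoint_subfamily_covering_enlargement_ball t' c r R (fun i hi => hr i hi.1) 5
      (by norm_num)
  have hu : u.Countable := hdisj.countable_of_isOpen (fun _ _ => isOpen_ball)
    fun i hi => nonempty_ball.2 (hut hi).2
  calc s * μ (⋃ i ∈ t, ball (c i) (r i))
      ≤ s * μ (⋃ i ∈ u, ball (c i) (5 * r i)) := by
        refine mul_le_mul_right (measure_mono (hunion.trans (iUnion₂_subset fun i hi => ?_))) s
        obtain ⟨j, hj, hij⟩ := hcover i hi
        exact hij.trans (subset_biUnion_of_mem (u := fun j => ball (c j) (5 * r j)) hj)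
    _ ≤ s * ∑' i : u, K * μ (ball (c i) (r i)) := by
        gcongr
        exact (measure_biUnion_le μ hu _).trans (ENNReal.tsum_le_tsum fun i => hK _ _)
    _ = K * ∑' i : u, s * μ (ball (c i) (r i)) := by
        simp only [ENNReal.tsum_mul_left, mul_left_comm]
    _ ≤ K * ∑' i : u, ∫⁻ x in ball (c i) (r i), h x ∂μ := by
        gcongr with i
        exact hs i (hut i.2).1
    _ = K * ∫⁻ x in ⋃ i ∈ u, ball (c i) (r i), h x ∂μ := by
        rw [lintegral_biUnion hu (fun _ _ => measurableSet_ball) hdisj]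
    _ ≤ K * ∫⁻ x, h x ∂μ := by
        gcongr
        exact Measure.restrict_le_self

lemma BallGrowth.mul_meas_lt_maximalFunction_le (hK : BallGrowth μ 5 K) (h : X → ℝ≥0∞)
    (s : ℝ≥0∞) : s * μ {x | s < maximalFunction μ h x} ≤ K * ∫⁻ x, h x ∂μ := by
  let t (N : ℕ) := {z : X × ℝ | s < ⨍⁻ y in ball z.1 z.2, h y ∂μ ∧ z.2 ≤ N}
  have hmono : Monotone fun N => ⋃ z ∈ t N, ball z.1 z.2 := fun N N' hN =>
    biUnion_mono (fun z hz => ⟨hz.1, hz.2.trans (by exact_mod_cast hN)⟩) fun _ _ => subset_rfl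
  have hunion : {x | s < maximalFunction μ h x} = ⋃ N, ⋃ z ∈ t N, ball z.1 z.2 := by
    rw [setOf_lt_maximalFunction]
    ext x
    simp only [mem_iUnion, exists_prop, t, mem_ofPred_eq]
    exact ⟨fun ⟨z, hz, hx⟩ => (exists_nat_ge z.2).imp fun N hN => ⟨z, ⟨hz, hN⟩, hx⟩,
      fun ⟨_, z, hz, hx⟩ => ⟨z, hz.1, hx⟩⟩
  rw [hunion, hmono.measure_iUnion, ENNReal.mul_iSup]
  refine iSup_le fun N => hK.mul_measure_biUnion_ball_le h s (fun z hz => hz.2) fun z hz => ?_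
  exact ENNReal.mul_le_of_le_div (by simpa only [setLAverage_eq] using hz.1.le)

lemma BallGrowth.mul_meas_lt_maximalFunction_le_setLIntegral (hK : BallGrowth μ 5 K)
    {h : X → ℝ≥0∞} (hh : Measurable h) (s : ℝ≥0∞) :
    s * μ {x | s < maximalFunction μ h x} ≤ 2 * K * ∫⁻ x in {x | s < 2 * h x}, h x ∂μ := by
  have hmeas : MeasurableSet {x | s < 2 * h x} := measurableSet_lt (by fun_prop) (by fun_prop)
  set g := {x | s < 2 * h x}.indicator h with hg
  have hle (x : X) : h x ≤ g x + s / 2 := by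
    by_cases hx : s < 2 * h x
    · simp only [hg, indicator_of_mem (show x ∈ {x | s < 2 * h x} from hx), le_self_add]
    · refine le_add_of_le_right (ENNReal.le_div_iff_mul_le (by simp) (by simp) |>.2 ?_)
      exact mul_comm (h x) 2 ▸ not_lt.1 hx
  have hsub : {x | s < maximalFunction μ h x} ⊆ {x | s / 2 < maximalFunction μ g x} := by
    intro x hx
    by_contra hxg
    refine (lt_irrefl s) (hx.trans_le ?_)
    calc maximalFunction μ h x ≤ maximalFunction μ g x + s / 2 :=
          maximalFunction_le_add_const (hh.indicator hmeas) hle x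
      _ ≤ s / 2 + s / 2 := by gcongr; exact not_lt.1 hxg
      _ = s := ENNReal.add_halves s
  calc s * μ {x | s < maximalFunction μ h x}
      ≤ s * μ {x | s / 2 < maximalFunction μ g x} := by gcongr
    _ = 2 * (s / 2 * μ {x | s / 2 < maximalFunction μ g x}) := by
        rw [← mul_assoc, ENNReal.mul_div_cancel two_ne_zero ENNReal.ofNat_ne_top]
    _ ≤ 2 * (K * ∫⁻ x, g x ∂μ) := mul_le_mul_right (hK.mul_meas_lt_maximalFunction_le g _) 2
    _ = 2 * K * ∫⁻ x in {x | s < 2 * h x}, h x ∂μ := by rw [lintegral_indicator hmeas, mul_assoc]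

lemma BallGrowth.lintegral_maximalFunction_rpow_le [SFinite μ] (hK : BallGrowth μ 5 K) {q : ℝ}
    (hq : 1 < q) {h : X → ℝ≥0∞} (hh : Measurable h) :
    ∫⁻ x, maximalFunction μ h x ^ q ∂μ ≤
      ENNReal.ofReal (q / (q - 1)) * (2 * K) * 2 ^ (q - 1) * ∫⁻ x, h x ^ q ∂μ := by
  have hq' : 0 < q - 1 := sub_pos.2 hq
  calc ∫⁻ x, maximalFunction μ h x ^ q ∂μ
      = ∫⁻ s, μ {x | ENNReal.ofReal s < maximalFunction μ h x} ∂powerMeasure q :=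
        lintegral_rpow_eq_lintegral_meas_lt_powerMeasure μ (by linarith)
          (measurable_maximalFunction h)
    _ = ENNReal.ofReal (q / (q - 1)) * ∫⁻ s, ENNReal.ofReal s *
          μ {x | ENNReal.ofReal s < maximalFunction μ h x} ∂powerMeasure (q - 1) :=
        lintegral_powerMeasure_eq_mul hq _
    _ ≤ ENNReal.ofReal (q / (q - 1)) * ∫⁻ s, 2 * K *
          (μ.withDensity h) {x | ENNReal.ofReal s < 2 * h x} ∂powerMeasure (q - 1) := by
        refine mul_le_mul_right (lintegral_mono fun s => ?_) _
        rw [withDensity_apply _ (measurableSet_lt (by fun_prop) (by fun_prop))]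
        exact hK.mul_meas_lt_maximalFunction_le_setLIntegral hh _
    _ = ENNReal.ofReal (q / (q - 1)) * (2 * K) * ∫⁻ x, (2 * h x) ^ (q - 1) ∂μ.withDensity h := by
        rw [lintegral_rpow_eq_lintegral_meas_lt_powerMeasure _ hq' (by fun_prop), mul_assoc,
          lintegral_const_mul _ (measurable_meas_ofReal_lt _ _)]
    _ = ENNReal.ofReal (q / (q - 1)) * (2 * K) * (2 ^ (q - 1) * ∫⁻ x, h x ^ q ∂μ) := by
        rw [lintegral_withDensity_eq_lintegral_mul _ hh (by fun_prop),
          ← lintegral_const_mul (2 ^ (q - 1)) (by fun_prop)]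
        congr 2 with x
        rw [Pi.mul_apply, ENNReal.mul_rpow_of_nonneg _ _ hq'.le, mul_left_comm]
        congr 1
        simpa only [ENNReal.rpow_one, add_sub_cancel] using
          (ENNReal.rpow_add_of_nonneg (x := h x) 1 (q - 1) zero_le_one hq'.le).symm
    _ = _ := (mul_assoc _ _ _).symm

end MaximalFunction

section Cones

variable {X : Type*} [PseudoMetricSpace X] [MeasurableSpace X]

/-- The mass that `ν` gives to the cone `{(t, y) | dist x y < α t}` of aperture `α` with vertex
`x`. The square of the conical square function of `g` has this form, with `ν` of density
`t ^ (-n) * |g| ^ 2`. -/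
def coneMass (ν : Measure (ℝ × X)) (α : ℝ) (x : X) : ℝ≥0∞ :=
  ν {z | dist x z.2 < α * z.1}

variable [OpensMeasurableSpace X] [SecondCountableTopology X] (ν : Measure (ℝ × X)) [SFinite ν]

lemma measurableSet_setOf_dist_lt_mul (α : ℝ) :
    MeasurableSet {w : X × ℝ × X | dist w.1 w.2.2 < α * w.2.1} :=
  measurableSet_lt (by fun_prop) (by fun_prop)

lemma measurable_coneMass (α : ℝ) : Measurable (coneMass ν α) :=
  measurable_measure_prodMk_left (measurableSet_setOf_dist_lt_mul α)

lemma lintegral_coneMass (μ : Measure X) [SFinite μ] (α : ℝ) :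
    ∫⁻ x, coneMass ν α x ∂μ = ∫⁻ z, μ (ball z.2 (α * z.1)) ∂ν :=
  (Measure.prod_apply (measurableSet_setOf_dist_lt_mul α)).symm.trans
    (Measure.prod_apply_symm (measurableSet_setOf_dist_lt_mul α))

variable {μ : Measure X} {α : ℝ} {A : ℝ≥0∞}

lemma BallGrowth.lintegral_coneMass_le [SFinite μ] (hA : BallGrowth μ α A) (hA_top : A ≠ ⊤) :
    ∫⁻ x, coneMass ν α x ∂μ ≤ A * ∫⁻ x, coneMass ν 1 x ∂μ := by
  rw [lintegral_coneMass, lintegral_coneMass, ← lintegral_const_mul' _ _ hA_top]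
  refine lintegral_mono fun z => ?_
  simpa only [one_mul] using hA z.2 z.1

end Cones

section ChangeOfAperture

variable {X : Type*} [PseudoMetricSpace X] [ProperSpace X] [MeasurableSpace X]
  {μ : Measure X} [IsFiniteMeasureOnCompacts μ] {α : ℝ} {A K : ℝ≥0∞}

lemma BallGrowth.measure_ball_sdiff_le (hA : BallGrowth μ α A) (hA0 : A ≠ 0) (hA_top : A ≠ ⊤)
    (hα : 1 ≤ α) {O : Set X} (hO : MeasurableSet O) (y : X) (t : ℝ) :
    μ (ball y (α * t) \ {x | (2 * A)⁻¹ < maximalFunction μ (O.indicator 1) x}) ≤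
      2 * A * μ (ball y t \ O) := by
  obtain hempty | ⟨x, hx, hxP⟩ := eq_empty_or_nonempty
    (ball y (α * t) \ {x | (2 * A)⁻¹ < maximalFunction μ (O.indicator 1) x})
  · simp [hempty]
  have hα0 : 0 < α := zero_lt_one.trans_le hα
  have ht : 0 < t := pos_of_mul_pos_right (pos_of_mem_ball hx) hα0.le
  have hsub : ball y t ⊆ ball y (α * t) := ball_subset_ball (le_mul_of_one_le_left ht.le hα)
  have havg : μ (O ∩ ball y (α * t)) / μ (ball y (α * t)) ≤ (2 * A)⁻¹ := by
    rw [← Measure.restrict_apply hO, ← lintegral_indicator_one hO, ← setLAverage_eq]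
    exact (setLAverage_ball_le_maximalFunction _ hx).trans (not_lt.1 hxP)
  have hO_le : μ (O ∩ ball y (α * t)) ≤ μ (ball y t) / 2 := by
    calc μ (O ∩ ball y (α * t)) ≤ (2 * A)⁻¹ * μ (ball y (α * t)) :=
          (ENNReal.div_le_iff_le_mul (.inr (by simp [hA0])) (.inl measure_ball_lt_top.ne)).1 havg
      _ ≤ (2 * A)⁻¹ * (A * μ (ball y t)) := by gcongr; exact hA y t
      _ = μ (ball y t) / 2 := by
          rw [ENNReal.mul_inv (by simp) (by simp), mul_assoc,
            ENNReal.inv_mul_cancel_left hA0 hA_top, ENNReal.div_eq_inv_mul]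
  have hhalf : μ (ball y t) ≤ 2 * μ (ball y t \ O) := by
    have hadd : μ (ball y t) / 2 + μ (ball y t) / 2 ≤ μ (ball y t \ O) + μ (ball y t) / 2 :=
      calc μ (ball y t) / 2 + μ (ball y t) / 2 = μ (ball y t \ O) + μ (O ∩ ball y t) := by
            rw [ENNReal.add_halves, ← measure_sdiff_add_inter (ball y t) hO, inter_comm]
        _ ≤ μ (ball y t \ O) + μ (ball y t) / 2 :=
            add_le_add_right ((measure_mono (inter_subset_inter_right O hsub)).trans hO_le) _
    rw [← ENNReal.div_le_iff' two_ne_zero ENNReal.ofNat_ne_top]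
    exact ENNReal.le_of_add_le_add_right
      (ENNReal.div_ne_top measure_ball_lt_top.ne two_ne_zero) hadd
  calc μ (ball y (α * t) \ {x | (2 * A)⁻¹ < maximalFunction μ (O.indicator 1) x})
      ≤ μ (ball y (α * t)) := measure_mono sdiff_subset
    _ ≤ A * μ (ball y t) := hA y t
    _ ≤ A * (2 * μ (ball y t \ O)) := by gcongr
    _ = 2 * A * μ (ball y t \ O) := by rw [mul_left_comm, mul_assoc]

variable [OpensMeasurableSpace X]

lemma BallGrowth.setLIntegral_ball_le (hA : BallGrowth μ α A) (hα : 1 ≤ α) (h : X → ℝ≥0∞) (y : X)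
    (t : ℝ) :
    ∫⁻ x in ball y (α * t), h x ∂μ ≤ A * ∫⁻ x in ball y t, maximalFunction μ h x ∂μ := by
  obtain ht | ht := le_or_gt t 0
  · simp [ball_eq_empty.2 (mul_nonpos_of_nonneg_of_nonpos (zero_le_one.trans hα) ht)]
  calc ∫⁻ x in ball y (α * t), h x ∂μ
      = μ (ball y (α * t)) * ⨍⁻ x in ball y (α * t), h x ∂μ :=
        (measure_mul_setLAverage h measure_ball_lt_top.ne).symm
    _ ≤ A * μ (ball y t) * ⨍⁻ x in ball y (α * t), h x ∂μ := by
        gcongr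
        exact hA y t
    _ = A * ∫⁻ _ in ball y t, (⨍⁻ x in ball y (α * t), h x ∂μ) ∂μ := by
        rw [setLIntegral_const, mul_assoc, mul_comm (μ _)]
    _ ≤ A * ∫⁻ x in ball y t, maximalFunction μ h x ∂μ := by
        refine mul_le_mul_right (setLIntegral_mono' measurableSet_ball fun x hx => ?_) A
        exact setLAverage_ball_le_maximalFunction h
          (ball_subset_ball (le_mul_of_one_le_left ht.le hα) hx)

variable (ν : Measure (ℝ × X)) [SFinite ν]

lemma BallGrowth.lintegral_coneMass_mul_le (hA : BallGrowth μ α A) (hA_top : A ≠ ⊤) (hα : 1 ≤ α)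
    {h : X → ℝ≥0∞} (hh : Measurable h) :
    ∫⁻ x, coneMass ν α x * h x ∂μ ≤ A * ∫⁻ x, coneMass ν 1 x * maximalFunction μ h x ∂μ := by
  have hdual (a : ℝ) {g : X → ℝ≥0∞} (hg : Measurable g) :
      ∫⁻ x, coneMass ν a x * g x ∂μ = ∫⁻ z, ∫⁻ x in ball z.2 (a * z.1), g x ∂μ ∂ν := by
    simp only [← withDensity_apply _ measurableSet_ball]
    rw [← lintegral_coneMass,
      lintegral_withDensity_eq_lintegral_mul _ hg (measurable_coneMass ν a)]
    simp only [Pi.mul_apply, mul_comm]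
  rw [hdual α hh, hdual 1 (measurable_maximalFunction h), ← lintegral_const_mul' _ _ hA_top]
  refine lintegral_mono fun z => ?_
  simpa only [one_mul] using hA.setLIntegral_ball_le hα h z.2 z.1

lemma BallGrowth.lintegral_coneMass_rpow_le_of_holderConjugate (hK : BallGrowth μ 5 K) {r q : ℝ}
    (hrq : r.HolderConjugate q) (hA : BallGrowth μ α A) (hA_top : A ≠ ⊤) (hα : 1 ≤ α) :
    ∫⁻ x, coneMass ν α x ^ r ∂μ ≤
      (ENNReal.ofReal (q / (q - 1)) * (2 * K) * 2 ^ (q - 1)) ^ (r / q) * A ^ r *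
        ∫⁻ x, coneMass ν 1 x ^ r ∂μ := by
  set D : ℝ≥0∞ := ENNReal.ofReal (q / (q - 1)) * (2 * K) * 2 ^ (q - 1)
  set I := ∫⁻ x, coneMass ν 1 x ^ r ∂μ
  have hq : 0 ≤ 1 / q := hrq.symm.one_div_nonneg
  have hdual : ∀ h : X → ℝ≥0∞, Measurable h → ∫⁻ x, coneMass ν α x * h x ∂μ ≤
      A * I ^ (1 / r) * D ^ (1 / q) * (∫⁻ x, h x ^ q ∂μ) ^ (1 / q) := fun h hh =>
    calc ∫⁻ x, coneMass ν α x * h x ∂μ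
        ≤ A * ∫⁻ x, coneMass ν 1 x * maximalFunction μ h x ∂μ :=
          hA.lintegral_coneMass_mul_le ν hA_top hα hh
      _ ≤ A * (I ^ (1 / r) * (∫⁻ x, maximalFunction μ h x ^ q ∂μ) ^ (1 / q)) := by
          gcongr
          exact ENNReal.lintegral_mul_le_Lp_mul_Lq μ hrq (measurable_coneMass ν 1).aemeasurable
            (measurable_maximalFunction h).aemeasurable
      _ ≤ A * (I ^ (1 / r) * (D * ∫⁻ x, h x ^ q ∂μ) ^ (1 / q)) := by
          gcongr
          exact hK.lintegral_maximalFunction_rpow_le hrq.symm.lt hh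
      _ = A * I ^ (1 / r) * D ^ (1 / q) * (∫⁻ x, h x ^ q ∂μ) ^ (1 / q) := by
          rw [ENNReal.mul_rpow_of_nonneg _ _ hq]
          ring
  refine (lintegral_rpow_le_of_forall_lintegral_mul_le hrq hdual).trans_eq ?_
  rw [ENNReal.mul_rpow_of_nonneg _ _ hrq.nonneg, ENNReal.mul_rpow_of_nonneg _ _ hrq.nonneg,
    ← ENNReal.rpow_mul, ← ENNReal.rpow_mul, one_div_mul_cancel hrq.ne_zero, ENNReal.rpow_one,
    one_div_mul_eq_div]
  ring

lemma BallGrowth.setLIntegral_compl_coneMass_le (hA : BallGrowth μ α A) (hA0 : A ≠ 0)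
    (hA_top : A ≠ ⊤) (hα : 1 ≤ α) {O : Set X} (hO : MeasurableSet O) :
    ∫⁻ x in {x | (2 * A)⁻¹ < maximalFunction μ (O.indicator 1) x}ᶜ, coneMass ν α x ∂μ ≤
      2 * A * ∫⁻ x in Oᶜ, coneMass ν 1 x ∂μ := by
  rw [lintegral_coneMass, lintegral_coneMass, ← lintegral_const_mul' _ _ (by finiteness)]
  refine lintegral_mono fun z => ?_
  simp only [Measure.restrict_apply measurableSet_ball, ← sdiff_eq, one_mul]
  exact hA.measure_ball_sdiff_le hA0 hA_top hα hO z.2 z.1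

lemma BallGrowth.meas_lt_coneMass_le (hK : BallGrowth μ 5 K) (hA : BallGrowth μ α A)
    (hA0 : A ≠ 0) (hA_top : A ≠ ⊤) (hα : 1 ≤ α) {s : ℝ≥0∞} (hs0 : s ≠ 0) (hs : s ≠ ⊤) :
    μ {x | s < coneMass ν α x} ≤ 2 * A * (K * μ {x | s < coneMass ν 1 x} +
      s⁻¹ * ∫⁻ x in {x | coneMass ν 1 x ≤ s}, coneMass ν 1 x ∂μ) := by
  have hO : MeasurableSet {x | s < coneMass ν 1 x} :=
    measurableSet_lt measurable_const (measurable_coneMass ν 1)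
  set O := {x | s < coneMass ν 1 x}
  set P := {x | (2 * A)⁻¹ < maximalFunction μ (O.indicator 1) x}
  have hP : MeasurableSet P :=
    measurableSet_lt measurable_const (measurable_maximalFunction (O.indicator 1))
  have hweak : μ P ≤ 2 * A * (K * μ O) := by
    rw [← ENNReal.inv_mul_le_iff (by simp [hA0]) (by finiteness), ← lintegral_indicator_one hO]
    exact hK.mul_meas_lt_maximalFunction_le (O.indicator 1) (2 * A)⁻¹
  have hgood : μ ({x | s < coneMass ν α x} \ P) ≤
      2 * A * (s⁻¹ * ∫⁻ x in Oᶜ, coneMass ν 1 x ∂μ) := by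
    calc μ ({x | s < coneMass ν α x} \ P)
        ≤ μ.restrict Pᶜ {x | s ≤ coneMass ν α x} := by
          rw [Measure.restrict_apply' hP.compl]
          exact measure_mono fun x hx => ⟨(show s < coneMass ν α x from hx.1).le, hx.2⟩
      _ ≤ s⁻¹ * ∫⁻ x in Pᶜ, coneMass ν α x ∂μ := by
          rw [← ENNReal.div_eq_inv_mul]
          exact meas_ge_le_lintegral_div (measurable_coneMass ν α).aemeasurable hs0 hs
      _ ≤ s⁻¹ * (2 * A * ∫⁻ x in Oᶜ, coneMass ν 1 x ∂μ) := by
          gcongr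
          exact hA.setLIntegral_compl_coneMass_le ν hA0 hA_top hα hO
      _ = _ := mul_left_comm _ _ _
  have hOc : Oᶜ = {x | coneMass ν 1 x ≤ s} := by
    ext x
    exact not_lt (α := ℝ≥0∞)
  calc μ {x | s < coneMass ν α x}
      ≤ μ ({x | s < coneMass ν α x} ∩ P) + μ ({x | s < coneMass ν α x} \ P) :=
        measure_le_inter_add_sdiff μ _ P
    _ ≤ 2 * A * (K * μ O) + 2 * A * (s⁻¹ * ∫⁻ x in Oᶜ, coneMass ν 1 x ∂μ) :=
        add_le_add ((measure_mono inter_subset_right).trans hweak) hgood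
    _ = _ := by rw [← mul_add, hOc]

lemma BallGrowth.lintegral_coneMass_rpow_le_of_lt_one (hK : BallGrowth μ 5 K)
    (hA : BallGrowth μ α A) (hA0 : A ≠ 0) (hA_top : A ≠ ⊤) (hα : 1 ≤ α) {r : ℝ} (hr : 0 < r)
    (hr1 : r < 1) :
    ∫⁻ x, coneMass ν α x ^ r ∂μ ≤
      2 * (K + ENNReal.ofReal (r / (1 - r))) * A * ∫⁻ x, coneMass ν 1 x ^ r ∂μ := by
  have hlayer (a : ℝ) := lintegral_rpow_eq_lintegral_meas_lt_powerMeasure μ hr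
    (measurable_coneMass ν a)
  calc ∫⁻ x, coneMass ν α x ^ r ∂μ
      = ∫⁻ s, μ {x | ENNReal.ofReal s < coneMass ν α x} ∂powerMeasure r := hlayer α
    _ ≤ ∫⁻ s, 2 * A * (K * μ {x | ENNReal.ofReal s < coneMass ν 1 x} +
          (ENNReal.ofReal s)⁻¹ * ∫⁻ x in {x | coneMass ν 1 x ≤ ENNReal.ofReal s}, coneMass ν 1 x ∂μ)
          ∂powerMeasure r :=
        lintegral_powerMeasure_mono fun s hs => hK.meas_lt_coneMass_le ν hA hA0 hA_top hα
          (ENNReal.ofReal_pos.2 hs).ne' ENNReal.ofReal_ne_top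
    _ = 2 * A * (K * ∫⁻ x, coneMass ν 1 x ^ r ∂μ + ∫⁻ s, (ENNReal.ofReal s)⁻¹ *
          ∫⁻ x in {x | coneMass ν 1 x ≤ ENNReal.ofReal s}, coneMass ν 1 x ∂μ ∂powerMeasure r) := by
        rw [lintegral_const_mul' _ _ (by finiteness),
          lintegral_add_left ((measurable_meas_ofReal_lt μ _).const_mul K),
          lintegral_const_mul _ (measurable_meas_ofReal_lt μ _), hlayer 1]
    _ ≤ 2 * A * (K * ∫⁻ x, coneMass ν 1 x ^ r ∂μ +
          ENNReal.ofReal (r / (1 - r)) * ∫⁻ x, coneMass ν 1 x ^ r ∂μ) := by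
        gcongr
        exact lintegral_inv_mul_setLIntegral_le_powerMeasure μ hr hr1 (measurable_coneMass ν 1)
    _ = 2 * (K + ENNReal.ofReal (r / (1 - r))) * A * ∫⁻ x, coneMass ν 1 x ^ r ∂μ := by ring

lemma BallGrowth.exists_lintegral_coneMass_rpow_le (hK : BallGrowth μ 5 K) (hK_top : K ≠ ⊤)
    {r : ℝ} (hr : 0 < r) :
    ∃ C ≠ (⊤ : ℝ≥0∞), ∀ (ν : Measure (ℝ × X)) [SFinite ν] (α : ℝ) (A : ℝ≥0∞), 1 ≤ α → A ≠ 0 →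
      A ≠ ⊤ → BallGrowth μ α A →
      ∫⁻ x, coneMass ν α x ^ r ∂μ ≤ C * A ^ max r 1 * ∫⁻ x, coneMass ν 1 x ^ r ∂μ := by
  obtain hr1 | rfl | hr1 := lt_trichotomy r 1
  · refine ⟨2 * (K + ENNReal.ofReal (r / (1 - r))), by finiteness, ?_⟩
    intro ν _ α A hα hA0 hA_top hA
    rw [max_eq_right hr1.le, ENNReal.rpow_one]
    exact hK.lintegral_coneMass_rpow_le_of_lt_one ν hA hA0 hA_top hα hr hr1
  · refine ⟨1, by finiteness, ?_⟩
    intro ν _ α A _ _ hA_top hA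
    simpa only [max_self, ENNReal.rpow_one, one_mul] using hA.lintegral_coneMass_le ν hA_top
  · set q := r.conjExponent
    have hrq : r.HolderConjugate q := .conjExponent hr1
    have hq := hrq.symm.sub_one_pos.le
    refine ⟨(ENNReal.ofReal (q / (q - 1)) * (2 * K) * 2 ^ (q - 1)) ^ (r / q), ?_, ?_⟩
    · exact ENNReal.rpow_ne_top_of_nonneg (div_nonneg hrq.nonneg hrq.symm.nonneg) (by finiteness)
    intro ν _ α A hα _ hA_top hA
    rw [max_eq_left hr1.le]
    exact hK.lintegral_coneMass_rpow_le_of_holderConjugate ν hrq hA hA_top hα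

end ChangeOfAperture

section TentNorm

variable {n : ℕ}

lemma ballGrowth_Rn (n : ℕ) {a : ℝ} (ha : 0 < a) :
    BallGrowth (volume : Measure (Rn n)) a (ENNReal.ofReal (a ^ n)) := fun c r => by
  rw [Measure.addHaar_ball_mul_of_pos _ _ ha, Measure.addHaar_ball_center volume c r,
    finrank_euclideanSpace_fin]

/-- The measure on `(0,∞) × ℝⁿ` whose cone masses are the inner integrals of `tentNorm`: density
`|f(t, y)| ^ 2 * t ^ (β - n / m)`, pushed forward by `t ↦ t ^ (1 / m)` to make the cones linear. -/
def tentMeasure (n m : ℕ) (β : ℝ) (f : ℝ → Rn n → ℂ) : Measure (ℝ × Rn n) :=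
  (((volume.restrict (Ioi (0 : ℝ))).prod volume).withDensity fun z =>
    (‖f z.1 z.2‖₊ : ℝ≥0∞) ^ 2 * ENNReal.ofReal (z.1 ^ (β - (n : ℝ) / (m : ℝ)))).map
      fun z => (z.1 ^ ((m : ℝ)⁻¹), z.2)

instance (n m : ℕ) (β : ℝ) (f : ℝ → Rn n → ℂ) : SFinite (tentMeasure n m β f) := by
  unfold tentMeasure
  infer_instance

lemma coneMass_tentMeasure (m : ℕ) (β α : ℝ) {f : ℝ → Rn n → ℂ}
    (hf : Measurable (Function.uncurry f)) (x : Rn n) :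
    coneMass (tentMeasure n m β f) α x = ∫⁻ t in Ioi (0 : ℝ),
      (∫⁻ y in ball x (α * t ^ ((m : ℝ)⁻¹)), (‖f t y‖₊ : ℝ≥0∞) ^ 2) *
        ENNReal.ofReal (t ^ (β - (n : ℝ) / (m : ℝ))) := by
  have hf' : Measurable fun z : ℝ × Rn n => f z.1 z.2 := hf
  have hcone : MeasurableSet {z : ℝ × Rn n | dist x z.2 < α * z.1 ^ ((m : ℝ)⁻¹)} :=
    measurableSet_lt (by fun_prop) (by fun_prop)
  rw [coneMass, tentMeasure, Measure.map_apply (by fun_prop)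
    (measurableSet_lt (by fun_prop) (by fun_prop)), preimage_ofPred_eq, withDensity_apply _ hcone,
    ← lintegral_indicator hcone,
    lintegral_prod _ (Measurable.indicator (by fun_prop) hcone).aemeasurable]
  refine lintegral_congr fun t => ?_
  rw [← lintegral_mul_const _ (by fun_prop), ← lintegral_indicator measurableSet_ball]
  simp only [indicator, mem_ofPred_eq, mem_ball']

lemma tentNorm_eq_lintegral_coneMass (m : ℕ) (β p α : ℝ) {f : ℝ → Rn n → ℂ}
    (hf : Measurable (Function.uncurry f)) :
    tentNorm n m β p α f = (∫⁻ x, coneMass (tentMeasure n m β f) α x ^ (p / 2)) ^ (1 / p) := by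
  simp only [tentNorm, coneMass_tentMeasure m β α hf]

lemma tentNorm_mono_aperture (m : ℕ) (β : ℝ) {p : ℝ} (hp : 0 ≤ p) {α α' : ℝ} (hα : α ≤ α')
    (f : ℝ → Rn n → ℂ) : tentNorm n m β p α f ≤ tentNorm n m β p α' f := by
  refine ENNReal.rpow_le_rpow (lintegral_mono fun x => ENNReal.rpow_le_rpow ?_ (by positivity))
    (by positivity)
  refine setLIntegral_mono' measurableSet_Ioi fun t (ht : 0 < t) => ?_
  gcongr

lemma max_half_one_mul_one_div {p : ℝ} (hp : 0 < p) :
    max (p / 2) 1 * (1 / p) = 1 / min p 2 := by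
  obtain h | h := le_total p 2
  · rw [max_eq_right (by linarith), min_eq_left h, one_mul]
  · rw [max_eq_left (by linarith), min_eq_right h]
    field_simp

lemma exists_tentNorm_le_mul_rpow_mul (n : ℕ) {p : ℝ} (hp : 0 < p) :
    ∃ C ≠ (⊤ : ℝ≥0∞), ∀ (m : ℕ) (β α : ℝ), 1 ≤ α → ∀ f : ℝ → Rn n → ℂ,
      Measurable (Function.uncurry f) → tentNorm n m β p α f ≤
        C * ENNReal.ofReal (α ^ ((n : ℝ) / min p 2)) * tentNorm n m β p 1 f := by
  have hfive : BallGrowth (volume : Measure (Rn n)) 5 _ := ballGrowth_Rn n (by norm_num)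
  obtain ⟨C, hC, hcone⟩ :=
    hfive.exists_lintegral_coneMass_rpow_le ENNReal.ofReal_ne_top (half_pos hp)
  have hp' : 0 ≤ 1 / p := one_div_nonneg.2 hp.le
  refine ⟨C ^ (1 / p), ENNReal.rpow_ne_top_of_nonneg hp' hC, fun m β α hα f hf => ?_⟩
  have hα0 : 0 < α := zero_lt_one.trans_le hα
  have hpow : (ENNReal.ofReal (α ^ n) ^ max (p / 2) 1) ^ (1 / p) =
      ENNReal.ofReal (α ^ ((n : ℝ) / min p 2)) := by
    rw [← ENNReal.rpow_mul, max_half_one_mul_one_div hp,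
      ENNReal.ofReal_rpow_of_pos (by positivity), ← Real.rpow_natCast_mul hα0.le, mul_one_div]
  simp only [tentNorm_eq_lintegral_coneMass m β p _ hf]
  rw [← hpow, ← ENNReal.mul_rpow_of_nonneg _ _ hp', ← ENNReal.mul_rpow_of_nonneg _ _ hp']
  gcongr
  exact hcone _ α _ hα (ENNReal.ofReal_pos.2 (by positivity)).ne' ENNReal.ofReal_ne_top
    (ballGrowth_Rn n hα0)

theorem tent_space_change_of_aperture_general (n : ℕ) {p : ℝ} (hp : 0 < p) :
    ∃ C : ℝ, 0 < C ∧ ∀ m : ℕ, 1 ≤ m → ∀ β α : ℝ, 1 ≤ α → ∀ f : ℝ → Rn n → ℂ,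
      Measurable (Function.uncurry f) →
      tentNorm n m β p 1 f ≤ tentNorm n m β p α f ∧
      tentNorm n m β p α f ≤
        ENNReal.ofReal (C * α ^ ((n : ℝ) / min p 2)) * tentNorm n m β p 1 f := by
  obtain ⟨C, hC, hle⟩ := exists_tentNorm_le_mul_rpow_mul n hp
  refine ⟨C.toReal + 1, by positivity, fun m _ β α hα f hf =>
    ⟨tentNorm_mono_aperture m β hp.le hα f, (hle m β α hα f hf).trans ?_⟩⟩
  rw [ENNReal.ofReal_mul (by positivity)]
  gcongr
  exact ENNReal.le_ofReal_iff_toReal_le hC (by positivity) |>.2 (by linarith)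

end TentNorm

/-- Change of aperture in tent spaces `T^{p,2}`, with the sharp power `α^{n/τ}`,
`τ = min(p,2)`. -/
theorem tent_space_change_of_aperture
    (n : ℕ) (hn : 1 ≤ n) (p : ℝ) (hp : 1 < p) :
    ∃ C : ℝ, 0 < C ∧ ∀ α : ℝ, 1 ≤ α → ∀ f : ℝ → Rn n → ℂ, CcOnPos n f →
      tentNorm n 1 (-1) p 1 f ≤ tentNorm n 1 (-1) p α f ∧
      tentNorm n 1 (-1) p α f ≤
        ENNReal.ofReal (C * (1 + Real.log α) * α ^ ((n:ℝ) / min p 2)) *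
          tentNorm n 1 (-1) p 1 f := by
  obtain ⟨C, hC, hCf⟩ := tent_space_change_of_aperture_general n (zero_lt_one.trans hp)
  refine ⟨C, hC, fun α hα f hf => ?_⟩
  obtain ⟨hmono, hle⟩ := hCf 1 le_rfl (-1) α hα f hf.1.measurable
  have hlog : 0 ≤ Real.log α := Real.log_nonneg hα
  refine ⟨hmono, hle.trans ?_⟩
  gcongr
  exact le_mul_of_one_le_right hC.le (by linarith)
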